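/- arXiv:1112.2017 — 2 statements merged into one kernel-verified Lean document; each statement's English description precedes it below -/
import Mathlib

section
/- Let C, r > 0 and ε ∈ (0,1), and choose γ with 0 < γ < rε and a positive integer n with n(rε − γ) > 1 and rn > 1. Let (M_t)_{t∈[0,1]} and (X_t)_{t∈[0,1]} be real-valued stochastic processes on a probability space such that: (i) almost surely, X has finite variation on [0,1] and |X_t − X_s| ≤ C|t − s|^r for all s, t ∈ [0,1]; (ii) there is a constant K such that for all s, t ∈ [0,1], E[|M_t − M_s|^n / |X_t − X_s|^{(1−ε)n}] ≤ K|t − s|^{rεn}, where the quotient |a|/0 is interpreted as +∞ for a ≠ 0 and as 0 for a = 0. Then M admits a continuous modification whose sample paths almost surely have finite 1/(1−ε)-variation on [0,1]. -/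
/-!
Summing the moment bounds over the `2 ^ k` pairs of neighbouring dyadic points of level `k`, and
then over `k`, shows that almost surely `|ΔM| ≤ w k * |ΔX| ^ q` on all these pairs, where
`q = 1 - ε` and `∑ w k < ∞`. Chaining preserves this form: an interval between two dyadic points of
level `k + 1` becomes one of level `k` by removing at most one step of level `k + 1` at each end.
All steps of the chain stay inside the interval, so every `|ΔX|` occurring there is at most the
variation of `X` on it. Hence, on dyadic points, `|M t - M s| ≤ C * (g t - g s) ^ q`, where `g t` is
the variation of `X` on `[0, t]`.

As `g` is continuous along with `X`, this estimate extends from the dyadic points to `[0, 1]`, where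
it gives continuity at once, and `1 / q`-variation at most `C ^ (1 / q) * g 1`. The extension is a
modification of `M`: as dyadic points tend to `t`, the moments of the quotients tend to `0`, so by
Fatou's lemma almost surely infinitely many of these dyadic points `s` satisfy
`|M s - M t| ≤ |X s - X t| ^ q`.
-/

open MeasureTheory Set

/-- `f` has finite `p`-variation on `[a,b]`: the sums `∑ |f(t_{i+1}) - f(t_i)|^p` over
finite partitions `a = t_0 < t_1 < ... < t_N = b` are uniformly bounded. -/
def HasFinitePVariationOn (f : ℝ → ℝ) (p a b : ℝ) : Prop :=
  ∃ V : ℝ, ∀ (N : ℕ) (t : ℕ → ℝ), t 0 = a → t N = b →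
    (∀ i, i < N → t i < t (i + 1)) →
    ∑ i ∈ Finset.range N, |f (t (i + 1)) - f (t i)| ^ p ≤ V

open Filter
open scoped Topology ENNReal NNReal

lemma exists_strict_partition_sum_eq {α A : Type*} [LinearOrder α] [AddCommMonoid A]
    {d : α → α → A} (hd : ∀ x, d x x = 0) {u : ℕ → α} (hu : Monotone u) (n : ℕ) :
    ∃ (N : ℕ) (t : ℕ → α), t 0 = u 0 ∧ t N = u n ∧ (∀ i < N, t i < t (i + 1)) ∧
      ∑ i ∈ Finset.range N, d (t (i + 1)) (t i) = ∑ i ∈ Finset.range n, d (u (i + 1)) (u i) := by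
  induction n with
  | zero => exact ⟨0, u, rfl, rfl, by simp, rfl⟩
  | succ n ih =>
    obtain ⟨N, t, ht0, htN, ht, hsum⟩ := ih
    rcases (hu n.le_succ).eq_or_lt with heq | hlt
    · refine ⟨N, t, ht0, htN.trans heq, ht, ?_⟩
      rw [Finset.sum_range_succ, hsum, ← heq, hd, add_zero]
    · refine ⟨N + 1, fun i => if i ≤ N then t i else u (n + 1), by simpa, by simp,
        by grind, ?_⟩
      rw [Finset.sum_range_succ, Finset.sum_range_succ, ← hsum]
      congr 1
      · exact Finset.sum_congr rfl (by grind)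
      · simp [htN]

lemma HasFinitePVariationOn.boundedVariationOn {f : ℝ → ℝ} {a b : ℝ}
    (hf : HasFinitePVariationOn f 1 a b) : BoundedVariationOn f (Icc a b) := by
  obtain ⟨V, hV⟩ := hf
  refine ne_top_of_le_ne_top (ENNReal.ofReal_ne_top (r := V)) (iSup_le ?_)
  rintro ⟨n, u, hu, hu_mem⟩
  let v : ℕ → ℝ := fun i => i.casesOn a fun i => if i ≤ n then u i else b
  have hv : Monotone v := monotone_nat_of_le_succ fun i => by
    rcases i with - | i
    · simpa [v] using (hu_mem 0).1
    · rcases lt_trichotomy i n with h | rfl | h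
      · simpa [v, h.le, h.nat_succ_le] using hu i.le_succ
      · simpa [v] using (hu_mem i).2
      · simp [v, h.not_ge, (h.trans i.lt_succ_self).not_ge]
  obtain ⟨N, t, ht0, htN, ht, hsum⟩ :=
    exists_strict_partition_sum_eq (d := fun x y => edist (f x) (f y))
      (fun x => edist_self (f x)) hv (n + 2)
  calc ∑ i ∈ Finset.range n, edist (f (u (i + 1))) (f (u i))
      = ∑ i ∈ Finset.range n, edist (f (v (i + 2))) (f (v (i + 1))) :=
        Finset.sum_congr rfl fun i hi => by
          have hi := Finset.mem_range.1 hi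
          simp [v, hi.le, hi.nat_succ_le]
    _ ≤ ∑ i ∈ Finset.range (n + 2), edist (f (v (i + 1))) (f (v i)) := by
        rw [Finset.sum_range_succ', Finset.sum_range_succ, add_assoc]
        exact le_self_add
    _ = ENNReal.ofReal (∑ i ∈ Finset.range N, |f (t (i + 1)) - f (t i)| ^ (1 : ℝ)) := by
        rw [← hsum, ENNReal.ofReal_sum_of_nonneg fun i _ => by positivity]
        simp [edist_dist, Real.dist_eq]
    _ ≤ ENNReal.ofReal V :=
        ENNReal.ofReal_le_ofReal (hV N t ht0 (htN.trans (by simp [v])) ht)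

section VariationFunction

variable {α E : Type*} [LinearOrder α] [PseudoEMetricSpace E] {f : α → E} {s : Set α} {a x y : α}

lemma edist_variationOnFromTo (hf : LocallyBoundedVariationOn f s) (ha : a ∈ s) (hx : x ∈ s)
    (hy : y ∈ s) (hxy : x ≤ y) :
    edist (variationOnFromTo f s a x) (variationOnFromTo f s a y)
      = eVariationOn f (s ∩ Icc x y) := by
  rw [edist_comm, edist_dist, Real.dist_eq, variationOnFromTo.sub_right hf ha hy hx,
    variationOnFromTo.eq_of_le f s hxy, ENNReal.abs_toReal, ENNReal.ofReal_toReal (hf x y hx hy)]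

lemma boundedVariationOn_variationOnFromTo (hf : BoundedVariationOn f s) (ha : a ∈ s) :
    BoundedVariationOn (variationOnFromTo f s a) s :=
  (variationOnFromTo.monotoneOn hf.locallyBoundedVariationOn ha).boundedVariationOn
    fun _ _ => variationOnFromTo.abs_le_eVariationOn hf

lemma continuousOn_variationOnFromTo [TopologicalSpace α] [OrderTopology α]
    (hf : BoundedVariationOn f s) (hc : ContinuousOn f s) (ha : a ∈ s) :
    ContinuousOn (variationOnFromTo f s a) s := by
  intro x hx
  have hlim : Tendsto (fun y => eVariationOn f (s ∩ Icc y x) + eVariationOn f (s ∩ Icc x y))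
      (𝓝[s] x) (𝓝 0) := by
    simpa using (hf.tendsto_eVariationOn_Icc_zero_left ((hc x hx).mono inter_subset_left)).add
      (hf.tendsto_eVariationOn_Icc_zero_right x ((hc x hx).mono inter_subset_left))
  refine tendsto_iff_edist_tendsto_0.2 (tendsto_of_tendsto_of_tendsto_of_le_of_le'
    tendsto_const_nhds hlim (Eventually.of_forall fun _ => zero_le) ?_)
  filter_upwards [self_mem_nhdsWithin] with y hy
  have hloc := hf.locallyBoundedVariationOn
  rcases le_total y x with hyx | hxy
  · exact (edist_variationOnFromTo hloc ha hy hx hyx).trans_le le_self_add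
  · rw [edist_comm]
    exact (edist_variationOnFromTo hloc ha hx hy hxy).trans_le le_add_self

end VariationFunction

/-- `f` is Hölder of exponent `q` and constant `C` on `s` when distances are measured by means of
`g`: the generalization of `HolderOnWith C q f s` in which `g` replaces the identity. -/
def HolderOnAlong {α E F : Type*} [PseudoEMetricSpace E] [PseudoEMetricSpace F] (C : ℝ≥0) (q : ℝ)
    (f : α → E) (g : α → F) (s : Set α) : Prop :=
  ∀ x ∈ s, ∀ y ∈ s, edist (f x) (f y) ≤ C * edist (g x) (g y) ^ q

namespace HolderOnAlong

variable {α E F : Type*} [PseudoEMetricSpace E] [PseudoEMetricSpace F] {C : ℝ≥0} {q : ℝ}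
  {f : α → E} {g : α → F} {s : Set α}

lemma tendsto_edist_zero (h : HolderOnAlong C q f g s) (hq : 0 < q) {ι : Type*} {l : Filter ι}
    {u v : ι → α} (hu : ∀ᶠ i in l, u i ∈ s) (hv : ∀ᶠ i in l, v i ∈ s)
    (hg : Tendsto (fun i => edist (g (u i)) (g (v i))) l (𝓝 0)) :
    Tendsto (fun i => edist (f (u i)) (f (v i))) l (𝓝 0) := by
  have hlim : Tendsto (fun i => C * edist (g (u i)) (g (v i)) ^ q) l (𝓝 0) := by
    simpa [ENNReal.zero_rpow_of_pos hq] using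
      ENNReal.Tendsto.const_mul (hg.ennrpow_const q) (Or.inr ENNReal.coe_ne_top)
  refine tendsto_of_tendsto_of_tendsto_of_le_of_le' tendsto_const_nhds hlim
    (Eventually.of_forall fun _ => zero_le) ?_
  filter_upwards [hu, hv] with i hui hvi using h _ hui _ hvi

lemma continuousOn [TopologicalSpace α] (h : HolderOnAlong C q f g s) (hq : 0 < q)
    (hg : ContinuousOn g s) : ContinuousOn f s := fun x hx =>
  tendsto_iff_edist_tendsto_0.2 <| h.tendsto_edist_zero hq self_mem_nhdsWithin
    (Eventually.of_forall fun _ => hx) (tendsto_iff_edist_tendsto_0.1 (hg x hx))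

lemma exists_tendsto [TopologicalSpace α] [CompleteSpace E] (h : HolderOnAlong C q f g s)
    (hq : 0 < q) {x : α} (hx : x ∈ closure s) (hg : ContinuousWithinAt g s x) :
    ∃ y, Tendsto f (𝓝[s] x) (𝓝 y) := by
  have : (𝓝[s] x).NeBot := mem_closure_iff_nhdsWithin_neBot.1 hx
  have hg' : Tendsto (fun p : α × α => edist (g p.1) (g p.2)) (𝓝[s] x ×ˢ 𝓝[s] x) (𝓝 0) := by
    simpa using (hg.tendsto.comp tendsto_fst).edist (hg.tendsto.comp tendsto_snd)
  have hf : Tendsto (fun p : α × α => edist (f p.1) (f p.2)) (𝓝[s] x ×ˢ 𝓝[s] x) (𝓝 0) :=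
    h.tendsto_edist_zero hq (tendsto_fst.eventually self_mem_nhdsWithin)
      (tendsto_snd.eventually self_mem_nhdsWithin) hg'
  exact cauchy_map_iff_exists_tendsto.1 <| cauchy_map_iff'.2 <|
    uniformity_basis_edist.tendsto_right_iff.2 fun ε hε => hf.eventually_lt_const hε

lemma extendFrom [TopologicalSpace α] [CompleteSpace E] (h : HolderOnAlong C q f g s)
    (hq : 0 < q) (hg : ContinuousOn g (closure s)) :
    HolderOnAlong C q (extendFrom s f) g (closure s) := by
  intro x hx y hy
  have hgx := (hg x hx).mono subset_closure
  have hgy := (hg y hy).mono subset_closure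
  have : (𝓝[s] x).NeBot := mem_closure_iff_nhdsWithin_neBot.1 hx
  have : (𝓝[s] y).NeBot := mem_closure_iff_nhdsWithin_neBot.1 hy
  have hf_lim : Tendsto (fun p : α × α => edist (f p.1) (f p.2)) (𝓝[s] x ×ˢ 𝓝[s] y)
      (𝓝 (edist (_root_.extendFrom s f x) (_root_.extendFrom s f y))) :=
    ((tendsto_extendFrom (h.exists_tendsto hq hx hgx)).comp tendsto_fst).edist
      ((tendsto_extendFrom (h.exists_tendsto hq hy hgy)).comp tendsto_snd)
  have hg_lim : Tendsto (fun p : α × α => C * edist (g p.1) (g p.2) ^ q) (𝓝[s] x ×ˢ 𝓝[s] y)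
      (𝓝 (C * edist (g x) (g y) ^ q)) :=
    ENNReal.Tendsto.const_mul
      (((hgx.tendsto.comp tendsto_fst).edist (hgy.tendsto.comp tendsto_snd)).ennrpow_const q)
      (Or.inr ENNReal.coe_ne_top)
  refine le_of_tendsto_of_tendsto hf_lim hg_lim ?_
  filter_upwards [tendsto_fst.eventually self_mem_nhdsWithin,
    tendsto_snd.eventually self_mem_nhdsWithin] with p hp₁ hp₂ using h _ hp₁ _ hp₂

lemma hasFinitePVariationOn {f : ℝ → ℝ} {g : ℝ → F} {a b : ℝ}
    (h : HolderOnAlong C q f g (Icc a b)) (hq : 0 < q) (hg : BoundedVariationOn g (Icc a b)) :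
    HasFinitePVariationOn f (1 / q) a b := by
  refine ⟨(C ^ (1 / q) * eVariationOn g (Icc a b)).toReal, fun N t ht0 htN ht => ?_⟩
  have ht_mono : MonotoneOn t (Iic N) := (strictMonoOn_Iic_of_lt_succ ht).monotoneOn
  have ht_mem : ∀ i ≤ N, t i ∈ Icc a b := fun i hi =>
    ⟨ht0 ▸ ht_mono N.zero_le hi i.zero_le, htN ▸ ht_mono hi self_mem_Iic hi⟩
  have hterm : ∀ x ∈ Icc a b, ∀ y ∈ Icc a b,
      ENNReal.ofReal (|f x - f y| ^ (1 / q)) ≤ C ^ (1 / q) * edist (g x) (g y) := by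
    intro x hx y hy
    have hpow := ENNReal.rpow_le_rpow (h x hx y hy) (z := 1 / q) (by positivity)
    rwa [ENNReal.mul_rpow_of_nonneg _ _ (by positivity), ← ENNReal.rpow_mul,
      mul_one_div_cancel hq.ne', ENNReal.rpow_one, edist_dist, Real.dist_eq,
      ENNReal.ofReal_rpow_of_nonneg (abs_nonneg _) (by positivity)] at hpow
  refine (ENNReal.ofReal_le_iff_le_toReal (ENNReal.mul_ne_top (by finiteness) hg)).1 ?_
  calc ENNReal.ofReal (∑ i ∈ Finset.range N, |f (t (i + 1)) - f (t i)| ^ (1 / q))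
      = ∑ i ∈ Finset.range N, ENNReal.ofReal (|f (t (i + 1)) - f (t i)| ^ (1 / q)) :=
        ENNReal.ofReal_sum_of_nonneg fun i _ => by positivity
    _ ≤ ∑ i ∈ Finset.range N, C ^ (1 / q) * edist (g (t (i + 1))) (g (t i)) :=
        Finset.sum_le_sum fun i hi => by
          have hi := Finset.mem_range.1 hi
          exact hterm _ (ht_mem _ hi) _ (ht_mem _ hi.le)
    _ ≤ C ^ (1 / q) * eVariationOn g (Icc a b) := by
        rw [← Finset.mul_sum]
        gcongr
        exact eVariationOn.sum_le_of_monotoneOn_Iic ht_mono ht_mem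

end HolderOnAlong

lemma continuousOn_of_abs_sub_le_mul_rpow {f : ℝ → ℝ} {s : Set ℝ} {C r : ℝ} (hr : 0 < r)
    (h : ∀ x ∈ s, ∀ y ∈ s, |f y - f x| ≤ C * |y - x| ^ r) : ContinuousOn f s := by
  have hf : HolderOnAlong C.toNNReal r f id s := fun x hx y hy => by
    rw [edist_comm (f x), edist_comm (id x), edist_dist, edist_dist, Real.dist_eq, Real.dist_eq,
      ENNReal.ofReal_rpow_of_nonneg (abs_nonneg _) hr.le]
    exact (ENNReal.ofReal_le_ofReal (h x hx y hy)).trans_eq (ENNReal.ofReal_mul' (by positivity))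
  exact hf.continuousOn hr continuousOn_id

/-- The dyadic point `j / 2 ^ k`, in the level-and-index form needed for chaining. -/
noncomputable def dyadicPoint (k j : ℕ) : ℝ := j / 2 ^ k

lemma dyadicPoint_succ_two_mul (k j : ℕ) : dyadicPoint (k + 1) (2 * j) = dyadicPoint k j := by
  simp [dyadicPoint, pow_succ', mul_div_mul_left]

lemma dyadicPoint_add_mul_two_pow (k l j : ℕ) :
    dyadicPoint (k + l) (j * 2 ^ l) = dyadicPoint k j := by
  simp [dyadicPoint, pow_add, mul_div_mul_right]

lemma monotone_dyadicPoint (k : ℕ) : Monotone (dyadicPoint k) := fun i j hij => by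
  unfold dyadicPoint
  gcongr

lemma dyadicPoint_mem_Icc {k j : ℕ} (hj : j ≤ 2 ^ k) : dyadicPoint k j ∈ Icc (0 : ℝ) 1 :=
  ⟨by unfold dyadicPoint; positivity,
    div_le_one_of_le₀ (mod_cast hj) (by positivity)⟩

lemma edist_dyadicPoint_succ (k j : ℕ) :
    edist (dyadicPoint k j) (dyadicPoint k (j + 1)) = (2⁻¹ : ℝ≥0∞) ^ k := by
  have hsub : dyadicPoint k (j + 1) - dyadicPoint k j = ((2 : ℝ) ^ k)⁻¹ := by
    unfold dyadicPoint
    push_cast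
    ring
  rw [edist_comm, edist_dist, Real.dist_eq, hsub, abs_of_pos (by positivity),
    ENNReal.ofReal_inv_of_pos (by positivity), ENNReal.ofReal_pow zero_le_two,
    ENNReal.ofReal_ofNat, ENNReal.inv_pow]

/-- The dyadic points of the unit interval. -/
def dyadicUnitPoints : Set ℝ := {x | ∃ k j, j ≤ 2 ^ k ∧ dyadicPoint k j = x}

lemma dyadicUnitPoints_subset_Icc : dyadicUnitPoints ⊆ Icc (0 : ℝ) 1 := by
  rintro _ ⟨k, j, hj, rfl⟩
  exact dyadicPoint_mem_Icc hj

lemma closure_dyadicUnitPoints : closure dyadicUnitPoints = Icc (0 : ℝ) 1 := by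
  refine (closure_minimal dyadicUnitPoints_subset_Icc isClosed_Icc).antisymm fun x hx => ?_
  have hlim : Tendsto (fun k : ℕ => dyadicPoint k ⌊x * 2 ^ k⌋₊) atTop (𝓝 x) :=
    (tendsto_nat_floor_mul_div_atTop hx.1).comp (tendsto_pow_atTop_atTop_of_one_lt one_lt_two)
  refine mem_closure_of_tendsto hlim (Eventually.of_forall fun k => ⟨k, _, ?_, rfl⟩)
  exact Nat.floor_le_of_le (by
    push_cast
    exact mul_le_of_le_one_left (by positivity) hx.2)

lemma exists_common_dyadic_level {x y : ℝ} (hx : x ∈ dyadicUnitPoints) (hy : y ∈ dyadicUnitPoints) :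
    ∃ k i j, i ≤ 2 ^ k ∧ j ≤ 2 ^ k ∧ dyadicPoint k i = x ∧ dyadicPoint k j = y := by
  obtain ⟨k, i, hi, rfl⟩ := hx
  obtain ⟨l, j, hj, rfl⟩ := hy
  refine ⟨k + l, i * 2 ^ l, j * 2 ^ k, ?_, ?_, dyadicPoint_add_mul_two_pow k l i, ?_⟩
  · rw [pow_add]
    gcongr
  · rw [pow_add, mul_comm (2 ^ k)]
    gcongr
  · rw [add_comm, dyadicPoint_add_mul_two_pow]

lemma edist_dyadicPoint_succ_level_le {E : Type*} [PseudoEMetricSpace E] {f : ℝ → E}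
    {c : Set ℝ → ℝ≥0∞} (hc : Monotone c) {N : ℕ} {A w : ℝ≥0∞}
    (hcoarse : ∀ a b, a ≤ b → b ≤ 2 ^ N → edist (f (dyadicPoint N a)) (f (dyadicPoint N b))
      ≤ A * c (Icc (dyadicPoint N a) (dyadicPoint N b)))
    (hstep : ∀ j < 2 ^ (N + 1),
      edist (f (dyadicPoint (N + 1) j)) (f (dyadicPoint (N + 1) (j + 1)))
        ≤ w * c (Icc (dyadicPoint (N + 1) j) (dyadicPoint (N + 1) (j + 1))))
    {a b : ℕ} (hab : a ≤ b) (hb : b ≤ 2 ^ (N + 1)) :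
    edist (f (dyadicPoint (N + 1) a)) (f (dyadicPoint (N + 1) b))
      ≤ (A + 2 * w) * c (Icc (dyadicPoint (N + 1) a) (dyadicPoint (N + 1) b)) := by
  rcases hab.eq_or_lt with rfl | hlt
  · simp
  set x := dyadicPoint (N + 1) a
  set y := dyadicPoint (N + 1) b
  -- The outermost points of level `N` in `[x, y]`: each is `x` or `y` itself or one step away.
  set x' := dyadicPoint N ((a + 1) / 2) with hx'
  set y' := dyadicPoint N (b / 2) with hy'
  rw [← dyadicPoint_succ_two_mul] at hx' hy'
  have hxx' : x ≤ x' := hx' ▸ monotone_dyadicPoint _ (by omega)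
  have hx'y' : x' ≤ y' := hx' ▸ hy' ▸ monotone_dyadicPoint _ (by omega)
  have hy'y : y' ≤ y := hy' ▸ monotone_dyadicPoint _ (by omega)
  have hleft : edist (f x) (f x') ≤ w * c (Icc x y) := by
    obtain heq | heq : 2 * ((a + 1) / 2) = a ∨ 2 * ((a + 1) / 2) = a + 1 := by omega
    · simp [hx', heq, x]
    · have hle := hstep a (by omega)
      rw [← heq, ← hx'] at hle
      exact hle.trans (by gcongr; exact hc (Icc_subset_Icc_right (hx'y'.trans hy'y)))
  have hright : edist (f y') (f y) ≤ w * c (Icc x y) := by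
    obtain heq | heq : 2 * (b / 2) = b ∨ 2 * (b / 2) + 1 = b := by omega
    · simp [hy', heq, y]
    · have hle := hstep (2 * (b / 2)) (by omega)
      rw [heq, ← hy'] at hle
      exact hle.trans (by gcongr; exact hc (Icc_subset_Icc_left (hxx'.trans hx'y')))
  have hmiddle : edist (f x') (f y') ≤ A * c (Icc x y) :=
    (hcoarse _ _ (by omega) (by omega)).trans (by gcongr; exact hc (Icc_subset_Icc hxx' hy'y))
  calc edist (f x) (f y)
      ≤ edist (f x) (f x') + edist (f x') (f y') + edist (f y') (f y) := edist_triangle4 _ _ _ _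
    _ ≤ w * c (Icc x y) + A * c (Icc x y) + w * c (Icc x y) := by gcongr
    _ = (A + 2 * w) * c (Icc x y) := by ring

lemma edist_dyadicPoint_le_of_neighbours {E : Type*} [PseudoEMetricSpace E] {f : ℝ → E}
    {w : ℕ → ℝ≥0∞} {c : Set ℝ → ℝ≥0∞} (hc : Monotone c)
    (hstep : ∀ k, ∀ j < 2 ^ k, edist (f (dyadicPoint k j)) (f (dyadicPoint k (j + 1)))
      ≤ w k * c (Icc (dyadicPoint k j) (dyadicPoint k (j + 1)))) (N : ℕ) :
    ∀ a b, a ≤ b → b ≤ 2 ^ N → edist (f (dyadicPoint N a)) (f (dyadicPoint N b))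
      ≤ 2 * (∑ k ∈ Finset.range (N + 1), w k) * c (Icc (dyadicPoint N a) (dyadicPoint N b)) := by
  induction N with
  | zero =>
    intro a b hab hb
    obtain rfl | ⟨rfl, rfl⟩ : a = b ∨ a = 0 ∧ b = 0 + 1 := by omega
    · simp
    · refine (hstep 0 0 (by simp)).trans ?_
      gcongr
      simpa using le_mul_of_one_le_left zero_le (one_le_two (α := ℝ≥0∞))
  | succ N ih =>
    intro a b hab hb
    rw [Finset.sum_range_succ _ (N + 1), mul_add]
    exact edist_dyadicPoint_succ_level_le hc ih (hstep (N + 1)) hab hb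

lemma holderOnAlong_variationOnFromTo_dyadicUnitPoints {E F : Type*} [PseudoEMetricSpace E]
    [PseudoEMetricSpace F] {f : ℝ → E} {g : ℝ → F} {q : ℝ} (hq : 0 ≤ q)
    (hg : BoundedVariationOn g (Icc 0 1)) {w : ℕ → ℝ≥0∞} (hw : ∑' k, w k ≠ ∞)
    (hstep : ∀ k, ∀ j < 2 ^ k, edist (f (dyadicPoint k j)) (f (dyadicPoint k (j + 1)))
      ≤ w k * edist (g (dyadicPoint k j)) (g (dyadicPoint k (j + 1))) ^ q) :
    HolderOnAlong (2 * ∑' k, w k).toNNReal q f (variationOnFromTo g (Icc 0 1) 0)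
      dyadicUnitPoints := by
  intro x hx y hy
  wlog hxy : x ≤ y generalizing x y
  · simpa only [edist_comm] using this y hy x hx (le_of_not_ge hxy)
  let c : Set ℝ → ℝ≥0∞ := fun I => eVariationOn g (Icc 0 1 ∩ I) ^ q
  have hc : Monotone c := fun I J hIJ =>
    ENNReal.rpow_le_rpow (eVariationOn.mono g (inter_subset_inter_right _ hIJ)) hq
  have hstep_c (k j : ℕ) (hj : j < 2 ^ k) :
      edist (f (dyadicPoint k j)) (f (dyadicPoint k (j + 1)))
        ≤ w k * c (Icc (dyadicPoint k j) (dyadicPoint k (j + 1))) := by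
    refine (hstep k j hj).trans (mul_le_mul_right (ENNReal.rpow_le_rpow ?_ hq) _)
    have hle := monotone_dyadicPoint k j.le_succ
    exact eVariationOn.edist_le g ⟨dyadicPoint_mem_Icc hj.le, left_mem_Icc.2 hle⟩
      ⟨dyadicPoint_mem_Icc hj, right_mem_Icc.2 hle⟩
  rw [ENNReal.coe_toNNReal (ENNReal.mul_ne_top ENNReal.ofNat_ne_top hw),
    edist_variationOnFromTo hg.locallyBoundedVariationOn (by simp)
      (dyadicUnitPoints_subset_Icc hx) (dyadicUnitPoints_subset_Icc hy) hxy]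
  obtain ⟨N, i, j, _, hj, rfl, rfl⟩ := exists_common_dyadic_level hx hy
  rcases le_total i j with hij | hji
  · refine (edist_dyadicPoint_le_of_neighbours hc hstep_c N i j hij hj).trans ?_
    gcongr
    exact ENNReal.sum_le_tsum _
  · rw [hxy.antisymm (monotone_dyadicPoint N hji), edist_self]
    exact zero_le

lemma tsum_mul_pow_ne_top {K r : ℝ≥0∞} (hK : K ≠ ∞) (hr : r < 1) : ∑' k : ℕ, K * r ^ k ≠ ∞ := by
  rw [ENNReal.tsum_mul_left, ENNReal.tsum_geometric]
  exact ENNReal.mul_ne_top hK (ENNReal.inv_ne_top.2 (tsub_pos_of_lt hr).ne')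

section Stochastic

variable {Ω : Type*} {mΩ : MeasurableSpace Ω} {μ : Measure Ω}

lemma ae_exists_forall_le_mul_pow {b : ℕ} {F : ℕ → ℕ → Ω → ℝ≥0∞} {K θ ρ : ℝ≥0∞}
    (hF_meas : ∀ k, ∀ j < b ^ k, AEMeasurable (F k j) μ) (hK : K ≠ ∞) (hρ : ρ ≠ ∞)
    (hθρ : b * θ < ρ) (hF : ∀ k, ∀ j < b ^ k, ∫⁻ ω, F k j ω ∂μ ≤ K * θ ^ k) :
    ∀ᵐ ω ∂μ, ∃ S ≠ ∞, ∀ k, ∀ j < b ^ k, F k j ω ≤ S * ρ ^ k := by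
  have hρ₀ : ρ ≠ 0 := (zero_le.trans_lt hθρ).ne'
  let G : ℕ → Ω → ℝ≥0∞ := fun k ω => ∑ j ∈ Finset.range (b ^ k), F k j ω / ρ ^ k
  have hG_meas (k : ℕ) : AEMeasurable (G k) μ :=
    Finset.aemeasurable_fun_sum _ fun j hj => (hF_meas k j (Finset.mem_range.1 hj)).div_const _
  have hG (k : ℕ) : ∫⁻ ω, G k ω ∂μ ≤ K * (b * θ / ρ) ^ k :=
    calc ∫⁻ ω, G k ω ∂μ
        = ∑ j ∈ Finset.range (b ^ k), (∫⁻ ω, F k j ω ∂μ) / ρ ^ k := by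
          rw [lintegral_finsetSum' _ fun j hj =>
            (hF_meas k j (Finset.mem_range.1 hj)).div_const _]
          exact Finset.sum_congr rfl fun j hj => by
            simp only [div_eq_mul_inv]
            exact lintegral_mul_const'' _ (hF_meas k j (Finset.mem_range.1 hj))
      _ ≤ ∑ _ ∈ Finset.range (b ^ k), K * θ ^ k / ρ ^ k := Finset.sum_le_sum fun _ hj => by
          gcongr
          exact hF k _ (Finset.mem_range.1 hj)
      _ = K * (b * θ / ρ) ^ k := by
          simp only [Finset.sum_const, Finset.card_range, nsmul_eq_mul, div_eq_mul_inv, mul_pow,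
            ENNReal.inv_pow, Nat.cast_pow]
          ring
  have hratio : b * θ / ρ < 1 :=
    (ENNReal.div_lt_iff (Or.inl hρ₀) (Or.inl hρ)).2 (by rwa [one_mul])
  have htsum : ∫⁻ ω, ∑' k, G k ω ∂μ ≠ ∞ := by
    rw [lintegral_tsum hG_meas]
    exact ne_top_of_le_ne_top (tsum_mul_pow_ne_top hK hratio) (ENNReal.tsum_le_tsum hG)
  filter_upwards [ae_lt_top' (AEMeasurable.tsum hG_meas) htsum] with ω hω
  refine ⟨∑' k, G k ω, hω.ne, fun k j hj => ?_⟩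
  rw [← ENNReal.div_le_iff (pow_ne_zero k hρ₀) (ENNReal.pow_ne_top hρ)]
  exact (Finset.single_le_sum (f := fun j => F k j ω / ρ ^ k) (fun _ _ => zero_le)
    (Finset.mem_range.2 hj)).trans (ENNReal.le_tsum k)

lemma ae_liminf_eq_zero_of_tendsto_lintegral {F : ℕ → Ω → ℝ≥0∞}
    (hF_meas : ∀ k, AEMeasurable (F k) μ) (hF : Tendsto (fun k => ∫⁻ ω, F k ω ∂μ) atTop (𝓝 0)) :
    ∀ᵐ ω ∂μ, liminf (fun k => F k ω) atTop = 0 := by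
  have hmeas : AEMeasurable (fun ω => liminf (fun k => F k ω) atTop) μ := by
    simp only [liminf_eq_iSup_iInf_of_nat]
    exact .iSup fun _ => .biInf _ (to_countable _) fun k _ => hF_meas k
  exact (lintegral_eq_zero_iff' hmeas).1 <|
    nonpos_iff_eq_zero.1 ((lintegral_liminf_le' hF_meas).trans_eq hF.liminf_eq)

/-- The quotient `|f s - f t| / |g s - g t| ^ q` whose moments the theorem controls. Division in
`ℝ≥0∞` gives it the value `∞` at `a / 0` for `a ≠ 0`, and `0` at `0 / 0`. -/
noncomputable def holderQuotient {α E F : Type*} [EDist E] [EDist F] (q : ℝ) (f : α → E)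
    (g : α → F) (s t : α) : ℝ≥0∞ :=
  edist (f s) (f t) / edist (g s) (g t) ^ q

lemma edist_le_mul_of_holderQuotient_le {α E F : Type*} [EDist E] [PseudoMetricSpace F]
    {q : ℝ} (hq : 0 ≤ q) {f : α → E} {g : α → F} {s t : α} {S : ℝ≥0∞} (hS : S ≠ ∞)
    (h : holderQuotient q f g s t ≤ S) :
    edist (f s) (f t) ≤ S * edist (g s) (g t) ^ q :=
  (ENNReal.div_le_iff_le_mul (Or.inr hS)
    (Or.inl (ENNReal.rpow_ne_top_of_nonneg hq (edist_ne_top _ _)))).1 h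

variable {E F : Type*} [PseudoMetricSpace F] {p q α : ℝ} {K : ℝ≥0∞} {X : ℝ → Ω → F}

lemma ae_exists_holderOnAlong_dyadicUnitPoints [PseudoEMetricSpace E] {M : ℝ → Ω → E}
    (hp : 0 < p) (hq : 0 ≤ q) (hα : 1 < α) (hK : K ≠ ∞)
    (hmeas : ∀ s ∈ Icc (0 : ℝ) 1, ∀ t ∈ Icc (0 : ℝ) 1,
      AEMeasurable (fun ω => holderQuotient q (M · ω) (X · ω) s t) μ)
    (hmoment : ∀ s ∈ Icc (0 : ℝ) 1, ∀ t ∈ Icc (0 : ℝ) 1,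
      ∫⁻ ω, holderQuotient q (M · ω) (X · ω) s t ^ p ∂μ ≤ K * edist s t ^ α)
    (hX : ∀ᵐ ω ∂μ, BoundedVariationOn (X · ω) (Icc 0 1)) :
    ∀ᵐ ω ∂μ, ∃ C, HolderOnAlong C q (M · ω) (variationOnFromTo (X · ω) (Icc 0 1) 0)
      dyadicUnitPoints := by
  have hθ : (2 : ℕ) * (2⁻¹ : ℝ≥0∞) ^ α < 1 := by
    rw [Nat.cast_ofNat, ENNReal.inv_rpow, ← div_eq_mul_inv, ENNReal.div_lt_iff (by simp) (by simp),
      one_mul]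
    simpa using ENNReal.rpow_lt_rpow_of_exponent_lt ENNReal.one_lt_two ENNReal.ofNat_ne_top hα
  obtain ⟨ρ, hθρ, hρ⟩ := exists_between hθ
  have hsum := ae_exists_forall_le_mul_pow (μ := μ)
    (F := fun k j ω =>
      holderQuotient q (M · ω) (X · ω) (dyadicPoint k j) (dyadicPoint k (j + 1)) ^ p)
    (fun k j hj => (hmeas _ (dyadicPoint_mem_Icc hj.le) _ (dyadicPoint_mem_Icc hj)).pow_const p)
    hK hρ.ne_top hθρ fun k j hj => by
      refine (hmoment _ (dyadicPoint_mem_Icc hj.le) _ (dyadicPoint_mem_Icc hj)).trans_eq ?_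
      rw [edist_dyadicPoint_succ, ← ENNReal.rpow_natCast_mul, ← ENNReal.rpow_mul_natCast,
        mul_comm (k : ℝ)]
  filter_upwards [hsum, hX] with ω ⟨S, hS, hle⟩ hXω
  have hw : ∑' k : ℕ, S ^ p⁻¹ * (ρ ^ p⁻¹) ^ k ≠ ∞ :=
    tsum_mul_pow_ne_top (ENNReal.rpow_ne_top_of_nonneg (by positivity) hS)
      (ENNReal.rpow_lt_one hρ (by positivity))
  refine ⟨_, holderOnAlong_variationOnFromTo_dyadicUnitPoints hq hXω hw fun k j hj =>
    edist_le_mul_of_holderQuotient_le (f := (M · ω)) (g := (X · ω)) hq ?_ ?_⟩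
  · exact ENNReal.ne_top_of_tsum_ne_top hw k
  · rw [← ENNReal.rpow_mul_natCast, mul_comm p⁻¹, ENNReal.rpow_natCast_mul,
      ← ENNReal.mul_rpow_of_nonneg _ _ (by positivity), ENNReal.le_rpow_inv_iff hp]
    exact hle k j hj

lemma ae_eq_of_tendsto_lintegral_holderQuotient [EMetricSpace E] {M : ℝ → Ω → E} {L : Ω → E}
    {u : ℕ → ℝ} {t : ℝ} (hp : 0 < p) (hq : 0 < q)
    (hmeas : ∀ k, AEMeasurable (fun ω => holderQuotient q (M · ω) (X · ω) (u k) t) μ)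
    (hmoment : Tendsto (fun k => ∫⁻ ω, holderQuotient q (M · ω) (X · ω) (u k) t ^ p ∂μ)
      atTop (𝓝 0))
    (hX : ∀ᵐ ω ∂μ, Tendsto (fun k => X (u k) ω) atTop (𝓝 (X t ω)))
    (hM : ∀ᵐ ω ∂μ, Tendsto (fun k => M (u k) ω) atTop (𝓝 (L ω))) :
    ∀ᵐ ω ∂μ, L ω = M t ω := by
  filter_upwards [hX, hM, ae_liminf_eq_zero_of_tendsto_lintegral
    (fun k => (hmeas k).pow_const p) hmoment] with ω hXω hMω hliminf
  have hfreq : ∃ᶠ k in atTop,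
      edist (M (u k) ω) (M t ω) ≤ 1 * edist (X (u k) ω) (X t ω) ^ q := by
    refine (frequently_lt_of_liminf_lt (by isBoundedDefault)
      (hliminf.trans_lt one_pos)).mono fun k hk => ?_
    exact edist_le_mul_of_holderQuotient_le hq.le ENNReal.one_ne_top
      ((ENNReal.rpow_lt_rpow_iff hp).1 (by simpa using hk)).le
  have hX_lim : Tendsto (fun k => 1 * edist (X (u k) ω) (X t ω) ^ q) atTop (𝓝 0) := by
    simpa [ENNReal.zero_rpow_of_pos hq] using
      (tendsto_iff_edist_tendsto_0.1 hXω).ennrpow_const q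
  exact edist_le_zero.1 <|
    le_of_tendsto_of_tendsto_of_frequently (hMω.edist tendsto_const_nhds) hX_lim hfreq

theorem exists_modification_holderOnAlong [EMetricSpace E] [CompleteSpace E] {M : ℝ → Ω → E}
    (hp : 0 < p) (hq : 0 < q) (hα : 1 < α) (hK : K ≠ ∞)
    (hmeas : ∀ s ∈ Icc (0 : ℝ) 1, ∀ t ∈ Icc (0 : ℝ) 1,
      AEMeasurable (fun ω => holderQuotient q (M · ω) (X · ω) s t) μ)
    (hmoment : ∀ s ∈ Icc (0 : ℝ) 1, ∀ t ∈ Icc (0 : ℝ) 1,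
      ∫⁻ ω, holderQuotient q (M · ω) (X · ω) s t ^ p ∂μ ≤ K * edist s t ^ α)
    (hX : ∀ᵐ ω ∂μ, BoundedVariationOn (X · ω) (Icc 0 1) ∧ ContinuousOn (X · ω) (Icc 0 1)) :
    ∃ M' : ℝ → Ω → E, (∀ t ∈ Icc (0 : ℝ) 1, ∀ᵐ ω ∂μ, M' t ω = M t ω) ∧
      ∀ᵐ ω ∂μ, ∃ C, HolderOnAlong C q (M' · ω) (variationOnFromTo (X · ω) (Icc 0 1) 0)
        (Icc 0 1) := by
  have hg : ∀ᵐ ω ∂μ, ContinuousOn (variationOnFromTo (X · ω) (Icc 0 1) 0) (Icc 0 1) :=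
    hX.mono fun ω hω => continuousOn_variationOnFromTo hω.1 hω.2 (by simp)
  have hdyadic := ae_exists_holderOnAlong_dyadicUnitPoints hp hq.le hα hK hmeas hmoment
    (hX.mono fun _ => And.left)
  refine ⟨fun t ω => extendFrom dyadicUnitPoints (M · ω) t, fun t ht => ?_, ?_⟩
  · obtain ⟨u, hu_mem, hu_lim⟩ :=
      mem_closure_iff_seq_limit.1 (closure_dyadicUnitPoints.symm ▸ ht)
    have hu_Icc (k : ℕ) : u k ∈ Icc (0 : ℝ) 1 := dyadicUnitPoints_subset_Icc (hu_mem k)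
    have hu_within : Tendsto u atTop (𝓝[dyadicUnitPoints] t) :=
      tendsto_nhdsWithin_iff.2 ⟨hu_lim, Eventually.of_forall hu_mem⟩
    have hmoment_lim : Tendsto (fun k => K * edist (u k) t ^ α) atTop (𝓝 0) := by
      simpa [ENNReal.zero_rpow_of_pos (one_pos.trans hα)] using ENNReal.Tendsto.const_mul
        ((tendsto_iff_edist_tendsto_0.1 hu_lim).ennrpow_const α) (Or.inr hK)
    refine ae_eq_of_tendsto_lintegral_holderQuotient (X := X) hp hq
      (fun k => hmeas _ (hu_Icc k) t ht)
      (tendsto_of_tendsto_of_tendsto_of_le_of_le tendsto_const_nhds hmoment_lim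
        (fun _ => zero_le) fun k => hmoment _ (hu_Icc k) t ht) ?_ ?_
    · filter_upwards [hX] with ω hω
      exact (hω.2 t ht).tendsto.comp
        (tendsto_nhdsWithin_iff.2 ⟨hu_lim, Eventually.of_forall hu_Icc⟩)
    · filter_upwards [hdyadic, hg] with ω ⟨C, hC⟩ hgω
      exact (tendsto_extendFrom (hC.exists_tendsto hq (closure_dyadicUnitPoints.symm ▸ ht)
        ((hgω t ht).mono dyadicUnitPoints_subset_Icc))).comp hu_within
  · filter_upwards [hdyadic, hg] with ω ⟨C, hC⟩ hgω
    have hC' := hC.extendFrom hq (by rwa [closure_dyadicUnitPoints])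
    exact ⟨C, by rwa [closure_dyadicUnitPoints] at hC'⟩

end Stochastic

lemma holderQuotient_rpow_eq_ofReal_div {ι : Type*} {p q : ℝ} (hp : 0 ≤ p) (hq : 0 ≤ q)
    (f g : ι → ℝ) (s t : ι) :
    holderQuotient q f g s t ^ p
      = ENNReal.ofReal (|f t - f s| ^ p) / ENNReal.ofReal (|g t - g s| ^ (q * p)) := by
  rw [holderQuotient, ENNReal.div_rpow_of_nonneg _ _ hp, ← ENNReal.rpow_mul, edist_comm (f s),
    edist_comm (g s), edist_dist, edist_dist, Real.dist_eq, Real.dist_eq,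
    ENNReal.ofReal_rpow_of_nonneg (abs_nonneg _) hp,
    ENNReal.ofReal_rpow_of_nonneg (abs_nonneg _) (mul_nonneg hq hp)]

theorem kolmogorov_centsov_variation_general
    {Ω : Type*} {mΩ : MeasurableSpace Ω} {μ : Measure Ω} {M X : ℝ → Ω → ℝ} {p q α : ℝ}
    (hp : 0 < p) (hq : 0 < q) (hα : 1 < α)
    (hM_meas : ∀ t, AEMeasurable (M t) μ) (hX_meas : ∀ t, AEMeasurable (X t) μ)
    (hX : ∀ᵐ ω ∂μ, HasFinitePVariationOn (fun t => X t ω) 1 0 1 ∧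
      ContinuousOn (fun t => X t ω) (Icc 0 1))
    (K : ℝ)
    (hM : ∀ s ∈ Icc (0 : ℝ) 1, ∀ t ∈ Icc (0 : ℝ) 1,
      ∫⁻ ω, ENNReal.ofReal (|M t ω - M s ω| ^ p) /
          ENNReal.ofReal (|X t ω - X s ω| ^ (q * p)) ∂μ
        ≤ ENNReal.ofReal (K * |t - s| ^ α)) :
    ∃ M' : ℝ → Ω → ℝ,
      (∀ t ∈ Icc (0 : ℝ) 1, ∀ᵐ ω ∂μ, M' t ω = M t ω) ∧
      ∀ᵐ ω ∂μ, ContinuousOn (fun t => M' t ω) (Icc 0 1) ∧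
        HasFinitePVariationOn (fun t => M' t ω) (1 / q) 0 1 := by
  have hX' : ∀ᵐ ω ∂μ, BoundedVariationOn (X · ω) (Icc 0 1) ∧ ContinuousOn (X · ω) (Icc 0 1) :=
    hX.mono fun ω hω => ⟨hω.1.boundedVariationOn, hω.2⟩
  have hmeas (s t : ℝ) : AEMeasurable (fun ω => holderQuotient q (M · ω) (X · ω) s t) μ :=
    ((hM_meas s).edist (hM_meas t)).div (((hX_meas s).edist (hX_meas t)).pow_const q)
  have hmoment : ∀ s ∈ Icc (0 : ℝ) 1, ∀ t ∈ Icc (0 : ℝ) 1,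
      ∫⁻ ω, holderQuotient q (M · ω) (X · ω) s t ^ p ∂μ ≤ ENNReal.ofReal K * edist s t ^ α := by
    intro s hs t ht
    simp only [holderQuotient_rpow_eq_ofReal_div hp.le hq.le]
    refine (hM s hs t ht).trans_eq ?_
    rw [ENNReal.ofReal_mul' (by positivity), edist_comm, edist_dist, Real.dist_eq,
      ENNReal.ofReal_rpow_of_nonneg (abs_nonneg _) (by positivity)]
  obtain ⟨M', hmod, hholder⟩ := exists_modification_holderOnAlong hp hq hα ENNReal.ofReal_ne_top
    (fun s _ t _ => hmeas s t) hmoment hX'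
  refine ⟨M', hmod, ?_⟩
  filter_upwards [hX', hholder] with ω ⟨hvar, hcont⟩ ⟨C, hC⟩
  exact ⟨hC.continuousOn hq (continuousOn_variationOnFromTo hvar hcont (by simp)),
    hC.hasFinitePVariationOn hq (boundedVariationOn_variationOnFromTo hvar (by simp))⟩

/-- A version of the Kolmogorov–Čentsov continuity theorem: if `X` is a.s. of finite
variation and `r`-Hölder with constant `C` on `[0,1]`, and the `n`-th moments of the ratios
`|M_t - M_s| / |X_t - X_s|^{1-ε}` are bounded by `K |t-s|^{rεn}` (with the convention
`|a|/0 = ∞` for `a ≠ 0` and `0/0 = 0`), then `M` admits a continuous modification whose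
sample paths a.s. have finite `1/(1-ε)`-variation on `[0,1]`. -/
theorem kolmogorov_centsov_variation
    {Ω : Type*} {mΩ : MeasurableSpace Ω} (μ : Measure Ω) [IsProbabilityMeasure μ]
    (M X : ℝ → Ω → ℝ) (C r ε γ : ℝ) (n : ℕ)
    (hMmeas : ∀ t, Measurable (M t)) (hXmeas : ∀ t, Measurable (X t))
    (hC : 0 < C) (hr : 0 < r) (hε : ε ∈ Set.Ioo (0 : ℝ) 1)
    (hγpos : 0 < γ) (hγ : γ < r * ε) (hn : 0 < n)
    (hn1 : 1 < (n : ℝ) * (r * ε - γ)) (hrn : 1 < r * (n : ℝ))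
    (hX : ∀ᵐ ω ∂μ, HasFinitePVariationOn (fun t => X t ω) 1 0 1 ∧
      ∀ s ∈ Set.Icc (0 : ℝ) 1, ∀ t ∈ Set.Icc (0 : ℝ) 1,
        |X t ω - X s ω| ≤ C * |t - s| ^ r)
    (K : ℝ)
    (hM : ∀ s ∈ Set.Icc (0 : ℝ) 1, ∀ t ∈ Set.Icc (0 : ℝ) 1,
      ∫⁻ ω, ENNReal.ofReal (|M t ω - M s ω| ^ (n : ℝ)) /
          ENNReal.ofReal (|X t ω - X s ω| ^ ((1 - ε) * (n : ℝ))) ∂μ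
        ≤ ENNReal.ofReal (K * |t - s| ^ (r * ε * (n : ℝ)))) :
    ∃ M' : ℝ → Ω → ℝ,
      (∀ t ∈ Set.Icc (0 : ℝ) 1, ∀ᵐ ω ∂μ, M' t ω = M t ω) ∧
      ∀ᵐ ω ∂μ, ContinuousOn (fun t => M' t ω) (Set.Icc 0 1) ∧
        HasFinitePVariationOn (fun t => M' t ω) (1 / (1 - ε)) 0 1 := by
  have hn' : (0 : ℝ) < n := mod_cast hn
  have hα : 1 < r * ε * n := hn1.trans (by nlinarith)
  exact kolmogorov_centsov_variation_general hn' (sub_pos.2 hε.2) hα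
    (fun t => (hMmeas t).aemeasurable) (fun t => (hXmeas t).aemeasurable)
    (hX.mono fun _ hω => ⟨hω.1, continuousOn_of_abs_sub_le_mul_rpow hr hω.2⟩) K hM
end

section
/- Let ε ∈ (0,1), set q = 1/(1−ε), and let γ > 0 and θ > q − 1. There is a constant C depending only on q and θ such that the following holds. Let M : [0,1] → ℝ be continuous and X : [0,1] → ℝ be of finite variation, and let b ≥ 0 be such that for every integer m ≥ 0 and every integer 0 ≤ k < 2^m one has |M_{(k+1)/2^m} − M_{k/2^m}| ≤ b·2^{−γm}·|X_{(k+1)/2^m} − X_{k/2^m}|^{1−ε}. Then for every finite partition 0 = t_0 < t_1 < ... < t_N = 1, ∑_{i=0}^{N−1} |M_{t_{i+1}} − M_{t_i}|^q ≤ C·b^q·∑_{m=0}^∞ (m+1)^θ·2^{−γqm}·∑_{k=0}^{2^m−1} |X_{(k+1)/2^m} − X_{k/2^m}|. In particular, since X has finite variation, M has finite q-variation on [0,1]. -/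
/-!
Along the dyadic grids of levels `0, …, n`, the outermost grid points inside an interval `[s, t]`
move by at most one dyadic interval at each end from one level to the next. By continuity,
`|M t - M s|` is therefore at most twice the sum over `m` of the largest increment of `M` over the
level-`m` dyadic intervals contained in `[s, t]`. Bounding the largest increment by the `ℓ^q` norm
and applying Hölder's inequality with the weights `(m+1)^θ`, which costs a finite constant because
`θ > q - 1`, gives `|M t - M s|^q ≤ C ω(s, t)`, where `ω(s, t)` is the weighted sum of the `q`-th
powers of all dyadic increments inside `[s, t]`. Dyadic intervals inside different partition
intervals are different, so `ω` is superadditive and the partition sum is at most `C ω(0, 1)`. The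
hypothesis, raised to the power `q = 1/(1-ε)`, turns increments of `M` into increments of `X`.
-/

open MeasureTheory ENNReal

open Filter Topology

lemma sum_range_le_of_superadditive {α β : Type*} [Preorder α] [AddCommMonoid β] [PartialOrder β]
    [CanonicallyOrderedAdd β] [IsOrderedAddMonoid β] {ω : α → α → β}
    (hω : ∀ ⦃s t u⦄, s ≤ t → t ≤ u → ω s t + ω t u ≤ ω s u) {t : ℕ → α} {N : ℕ}
    (ht : MonotoneOn t (Set.Iic N)) :
    ∑ i ∈ Finset.range N, ω (t i) (t (i + 1)) ≤ ω (t 0) (t N) := by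
  induction N with
  | zero => simp
  | succ n ih =>
    rw [Finset.sum_range_succ]
    calc _ ≤ ω (t 0) (t n) + ω (t n) (t (n + 1)) := by
          gcongr
          exact ih (ht.mono (Set.Iic_subset_Iic.2 n.le_succ))
      _ ≤ ω (t 0) (t (n + 1)) :=
          hω (ht (by simp) (by simp) n.zero_le) (ht (by simp) (by simp) n.le_succ)

lemma tsum_rpow_le_tsum_weight_rpow_mul {ι : Type*} {q : ℝ} (hq : 1 ≤ q) {w : ι → ℝ≥0∞}
    (hw₀ : ∀ i, w i ≠ 0) (hw : ∀ i, w i ≠ ∞) (a : ι → ℝ≥0∞) :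
    (∑' i, a i) ^ q ≤ (∑' i, w i) ^ (q - 1) * ∑' i, w i ^ (1 - q) * a i ^ q := by
  have hq₀ : 0 < q := one_pos.trans_le hq
  rw [← ENNReal.le_rpow_inv_iff hq₀, ENNReal.tsum_eq_iSup_sum]
  refine iSup_le fun s ↦ ?_
  have hterm (i : ι) : w i * (a i / w i) ^ q = w i ^ (1 - q) * a i ^ q := by
    rw [ENNReal.div_rpow_of_nonneg _ _ hq₀.le, ENNReal.rpow_sub _ _ (hw₀ i) (hw i),
      ENNReal.rpow_one, div_eq_mul_inv, div_eq_mul_inv]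
    ring
  calc ∑ i ∈ s, a i = ∑ i ∈ s, w i * (a i / w i) := by
        simp only [ENNReal.mul_div_cancel (hw₀ _) (hw _)]
    _ ≤ (∑ i ∈ s, w i) ^ (1 - q⁻¹) * (∑ i ∈ s, w i * (a i / w i) ^ q) ^ q⁻¹ :=
        ENNReal.inner_le_weight_mul_Lp_of_nonneg s hq _ _
    _ = ((∑ i ∈ s, w i) ^ (q - 1) * ∑ i ∈ s, w i ^ (1 - q) * a i ^ q) ^ q⁻¹ := by
        simp only [hterm]
        rw [ENNReal.mul_rpow_of_nonneg _ _ (by positivity), ← ENNReal.rpow_mul, sub_mul,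
          mul_inv_cancel₀ hq₀.ne', one_mul]
    _ ≤ ((∑' i, w i) ^ (q - 1) * ∑' i, w i ^ (1 - q) * a i ^ q) ^ q⁻¹ := by
        have : 0 ≤ q - 1 := sub_nonneg.2 hq
        gcongr <;> exact ENNReal.sum_le_tsum s

lemma ofReal_add_one_rpow (m : ℕ) (θ : ℝ) :
    ENNReal.ofReal (((m : ℝ) + 1) ^ θ) = ((m : ℝ≥0∞) + 1) ^ θ := by
  rw [← ENNReal.ofReal_rpow_of_pos (by positivity), ENNReal.ofReal_add (by positivity) zero_le_one,
    ENNReal.ofReal_natCast, ENNReal.ofReal_one]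

lemma summable_add_one_rpow_mul_geometric (θ : ℝ) {r : ℝ} (hr₀ : 0 < r) (hr : r < 1) :
    Summable fun m : ℕ ↦ ((m : ℝ) + 1) ^ θ * r ^ m := by
  have hpow : Summable fun m : ℕ ↦ ((m : ℝ) + 1) ^ ⌈θ⌉₊ * r ^ m := by
    have h := summable_pow_mul_geometric_of_norm_lt_one ⌈θ⌉₊
      (by rwa [Real.norm_of_nonneg hr₀.le] : ‖r‖ < 1)
    refine (((summable_nat_add_iff 1).2 h).mul_right r⁻¹).congr fun m ↦ ?_
    push_cast
    field_simp
    ring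
  refine hpow.of_nonneg_of_le (fun m ↦ by positivity) fun m ↦ ?_
  gcongr
  rw [← Real.rpow_natCast]
  exact Real.rpow_le_rpow_of_exponent_le (by simp) (Nat.le_ceil θ)

section Floor

variable {K : Type*} [Field K] [LinearOrder K] [IsStrictOrderedRing K] [FloorSemiring K]

lemma floor_two_mul_bounds (x : K) : 2 * ⌊x⌋₊ ≤ ⌊2 * x⌋₊ ∧ ⌊2 * x⌋₊ ≤ 2 * ⌊x⌋₊ + 1 := by
  have h : ⌊x⌋₊ = ⌊2 * x⌋₊ / 2 := by
    rw [← Nat.floor_div_ofNat, mul_div_cancel_left₀ x two_ne_zero]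
  omega

lemma ceil_two_mul_bounds (x : K) : ⌈2 * x⌉₊ ≤ 2 * ⌈x⌉₊ ∧ 2 * ⌈x⌉₊ ≤ ⌈2 * x⌉₊ + 1 := by
  constructor
  · rw [Nat.ceil_le]
    push_cast
    linarith [Nat.le_ceil x]
  · have hround : ⌈2 * x⌉₊ ≤ 2 * ((⌈2 * x⌉₊ + 1) / 2) := by omega
    have h : ⌈x⌉₊ ≤ (⌈2 * x⌉₊ + 1) / 2 := by
      rw [Nat.ceil_le]
      linarith [Nat.ceil_le.1 hround, Nat.cast_mul (α := K) 2 ((⌈2 * x⌉₊ + 1) / 2)]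
    omega

end Floor

section Dyadic

variable {E : Type*} [PseudoEMetricSpace E]

/-- The indices `k` of the level-`m` dyadic intervals `[k/2^m, (k+1)/2^m]` contained in `[s, t]`,
running from the first level-`m` dyadic point of `[s, t]` to just before the last one. -/
noncomputable def dyadicIndices (s t : ℝ) (m : ℕ) : Finset ℕ :=
  Finset.Ico ⌈s * 2 ^ m⌉₊ ⌊t * 2 ^ m⌋₊

/-- The size of the increment of `f` over the dyadic interval `[k/2^m, (k+1)/2^m]`, as an extended
nonnegative real. -/
noncomputable def dyadicIncrement (f : ℝ → E) (m k : ℕ) : ℝ≥0∞ :=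
  edist (f ((k + 1) / 2 ^ m)) (f (k / 2 ^ m))

lemma edist_dyadic_le {f : ℝ → E} {s t : ℝ} {m : ℕ} {a : ℝ≥0∞}
    (ha : ∀ k ∈ dyadicIndices s t m, dyadicIncrement f m k ≤ a) {i j : ℕ}
    (hi : ⌈s * 2 ^ m⌉₊ ≤ i) (hij : i ≤ j) (hji : j ≤ i + 1) (hj : j ≤ ⌊t * 2 ^ m⌋₊) :
    edist (f (i / 2 ^ m)) (f (j / 2 ^ m)) ≤ a := by
  obtain rfl | rfl : j = i ∨ j = i + 1 := by omega
  · simp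
  · simpa [dyadicIncrement, edist_comm] using ha i (Finset.mem_Ico.2 ⟨hi, hj⟩)

/-- Refining the grid from level `n` to level `n + 1` moves each of the two outermost dyadic points
of `[s, t]` by at most one dyadic interval. If the grid first meets `[s, t]` at level `n + 1`, the
two points coincide. -/
lemma edist_dyadic_endpoints_le {f : ℝ → E} {A : ℕ → ℝ≥0∞} {s t : ℝ} (hts : t ≤ s + 1)
    (hA : ∀ m, ∀ k ∈ dyadicIndices s t m, dyadicIncrement f m k ≤ A m) {n : ℕ}
    (hn : ⌈s * 2 ^ n⌉₊ ≤ ⌊t * 2 ^ n⌋₊) :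
    edist (f (⌈s * 2 ^ n⌉₊ / 2 ^ n)) (f (⌊t * 2 ^ n⌋₊ / 2 ^ n)) ≤
      2 * ∑ m ∈ Finset.range (n + 1), A m := by
  induction n with
  | zero =>
    have hlen : ⌊t * 2 ^ 0⌋₊ ≤ ⌈s * 2 ^ 0⌉₊ + 1 := by
      have : t ≤ ⌈s⌉₊ + 1 := by linarith [Nat.le_ceil s]
      simpa using Nat.floor_le_of_le (by exact_mod_cast this)
    calc _ ≤ A 0 := edist_dyadic_le (hA 0) le_rfl hn hlen le_rfl
      _ ≤ 2 * ∑ m ∈ Finset.range (0 + 1), A m := by simp [two_mul]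
  | succ n ih =>
    obtain ⟨hl₁, hl₂⟩ := ceil_two_mul_bounds (s * 2 ^ n)
    obtain ⟨hr₁, hr₂⟩ := floor_two_mul_bounds (t * 2 ^ n)
    rw [mul_left_comm, ← pow_succ'] at hl₁ hl₂ hr₁ hr₂
    by_cases hle : ⌈s * 2 ^ n⌉₊ ≤ ⌊t * 2 ^ n⌋₊
    · have hrefine (j : ℕ) : (j : ℝ) / 2 ^ n = (2 * j : ℕ) / 2 ^ (n + 1) := by
        push_cast
        rw [pow_succ']
        field_simp
      specialize ih hle
      rw [hrefine, hrefine] at ih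
      calc _ ≤ _ := edist_triangle4 _ (f ((2 * ⌈s * 2 ^ n⌉₊ : ℕ) / 2 ^ (n + 1)))
            (f ((2 * ⌊t * 2 ^ n⌋₊ : ℕ) / 2 ^ (n + 1))) _
        _ ≤ A (n + 1) + 2 * ∑ m ∈ Finset.range (n + 1), A m + A (n + 1) := by
          gcongr
          · exact edist_dyadic_le (hA (n + 1)) le_rfl hl₁ hl₂ (by omega)
          · exact edist_dyadic_le (hA (n + 1)) (by omega) hr₁ hr₂ le_rfl
        _ = 2 * ∑ m ∈ Finset.range (n + 1 + 1), A m := by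
          rw [Finset.sum_range_succ _ (n + 1)]
          ring
    · have heq : ⌈s * 2 ^ (n + 1)⌉₊ = ⌊t * 2 ^ (n + 1)⌋₊ := by omega
      simp [heq]

lemma edist_le_two_mul_tsum_of_dyadicIncrement_le {f : ℝ → E} {A : ℕ → ℝ≥0∞} {s t : ℝ}
    (hs : 0 ≤ s) (hst : s ≤ t) (hts : t ≤ s + 1) (hf : ContinuousOn f (Set.Icc s t))
    (hA : ∀ m, ∀ k ∈ dyadicIndices s t m, dyadicIncrement f m k ≤ A m) :
    edist (f s) (f t) ≤ 2 * ∑' m, A m := by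
  obtain rfl | hlt := hst.eq_or_lt
  · simp
  have hpow : Tendsto (fun n : ℕ ↦ (2 : ℝ) ^ n) atTop atTop :=
    tendsto_pow_atTop_atTop_of_one_lt one_lt_two
  have hl : Tendsto (fun n : ℕ ↦ (⌈s * 2 ^ n⌉₊ / 2 ^ n : ℝ)) atTop (𝓝 s) :=
    (tendsto_nat_ceil_mul_div_atTop hs).comp hpow
  have hr : Tendsto (fun n : ℕ ↦ (⌊t * 2 ^ n⌋₊ / 2 ^ n : ℝ)) atTop (𝓝 t) :=
    (tendsto_nat_floor_mul_div_atTop (hs.trans hst)).comp hpow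
  have hlr : ∀ᶠ n : ℕ in atTop, (⌈s * 2 ^ n⌉₊ / 2 ^ n : ℝ) ≤ ⌊t * 2 ^ n⌋₊ / 2 ^ n :=
    (hl.eventually_lt hr hlt).mono fun _ ↦ le_of_lt
  have hsl (n : ℕ) : s ≤ ⌈s * 2 ^ n⌉₊ / 2 ^ n :=
    (le_div_iff₀ (by positivity)).2 (Nat.le_ceil _)
  have hrt (n : ℕ) : ⌊t * 2 ^ n⌋₊ / 2 ^ n ≤ t :=
    (div_le_iff₀ (by positivity)).2 (Nat.floor_le (mul_nonneg (hs.trans hst) (by positivity)))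
  have hfl : Tendsto (fun n : ℕ ↦ f (⌈s * 2 ^ n⌉₊ / 2 ^ n)) atTop (𝓝 (f s)) :=
    (hf s (Set.left_mem_Icc.2 hst)).tendsto.comp <| tendsto_nhdsWithin_iff.2
      ⟨hl, hlr.mono fun n hn ↦ ⟨hsl n, hn.trans (hrt n)⟩⟩
  have hfr : Tendsto (fun n : ℕ ↦ f (⌊t * 2 ^ n⌋₊ / 2 ^ n)) atTop (𝓝 (f t)) :=
    (hf t (Set.right_mem_Icc.2 hst)).tendsto.comp <| tendsto_nhdsWithin_iff.2
      ⟨hr, hlr.mono fun n hn ↦ ⟨(hsl n).trans hn, hrt n⟩⟩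
  refine le_of_tendsto (hfl.edist hfr) (hlr.mono fun n hn ↦ ?_)
  rw [div_le_div_iff_of_pos_right (by positivity), Nat.cast_le] at hn
  exact (edist_dyadic_endpoints_le hts hA hn).trans (by gcongr; exact ENNReal.sum_le_tsum _)

/-- The sum over all levels `m`, with weights `(m+1)^θ`, of the `q`-th powers of the increments of
`f` over the level-`m` dyadic intervals contained in `[s, t]`. It is superadditive in `[s, t]`, as
the controls of rough path theory are. -/
noncomputable def dyadicControl (f : ℝ → E) (q θ s t : ℝ) : ℝ≥0∞ :=
  ∑' m : ℕ, ((m : ℝ≥0∞) + 1) ^ θ * ∑ k ∈ dyadicIndices s t m, dyadicIncrement f m k ^ q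

/-- The constant of the chaining estimate: the factor `2 ^ q` stems from refining the grid at both
ends of an interval, the other one from Hölder's inequality. It is infinite unless the weights
`(m+1)^(-θ/(q-1))` are summable. -/
noncomputable def chainingConst (q θ : ℝ) : ℝ≥0∞ :=
  2 ^ q * (∑' m : ℕ, ((m : ℝ≥0∞) + 1) ^ (-(θ / (q - 1)))) ^ (q - 1)

lemma edist_rpow_le_dyadicControl {f : ℝ → E} {q s t : ℝ} (hq : 1 < q) (θ : ℝ) (hs : 0 ≤ s)
    (hst : s ≤ t) (hts : t ≤ s + 1) (hf : ContinuousOn f (Set.Icc s t)) :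
    edist (f s) (f t) ^ q ≤ chainingConst q θ * dyadicControl f q θ s t := by
  have hq₀ : 0 < q := one_pos.trans hq
  set S : ℕ → ℝ≥0∞ := fun m ↦ ∑ k ∈ dyadicIndices s t m, dyadicIncrement f m k ^ q
  set w : ℕ → ℝ≥0∞ := fun m ↦ ((m : ℝ≥0∞) + 1) ^ (-(θ / (q - 1)))
  have hchain : edist (f s) (f t) ≤ 2 * ∑' m, S m ^ q⁻¹ := by
    refine edist_le_two_mul_tsum_of_dyadicIncrement_le hs hst hts hf fun m k hk ↦ ?_
    exact (ENNReal.le_rpow_inv_iff hq₀).2 (Finset.single_le_sum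
      (f := fun k ↦ dyadicIncrement f m k ^ q) (fun _ _ ↦ zero_le) hk)
  have hbase (m : ℕ) : (m : ℝ≥0∞) + 1 ≠ ∞ := by finiteness
  have hweight (m : ℕ) : w m ^ (1 - q) = ((m : ℝ≥0∞) + 1) ^ θ := by
    rw [← ENNReal.rpow_mul]
    congr 1
    field_simp [sub_ne_zero.2 hq.ne']
    ring
  calc edist (f s) (f t) ^ q ≤ (2 * ∑' m, S m ^ q⁻¹) ^ q := by gcongr
    _ = 2 ^ q * (∑' m, S m ^ q⁻¹) ^ q := ENNReal.mul_rpow_of_nonneg _ _ hq₀.le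
    _ ≤ 2 ^ q * ((∑' m, w m) ^ (q - 1) * ∑' m, w m ^ (1 - q) * (S m ^ q⁻¹) ^ q) := by
        gcongr
        exact tsum_rpow_le_tsum_weight_rpow_mul hq.le
          (fun m ↦ (ENNReal.rpow_pos (by positivity) (hbase m)).ne')
          (fun m ↦ ENNReal.rpow_ne_top_of_ne_zero (by positivity) (hbase m)) _
    _ = chainingConst q θ * dyadicControl f q θ s t := by
        simp only [hweight, ENNReal.rpow_inv_rpow hq₀.ne']
        simp only [chainingConst, dyadicControl, S, w, mul_assoc]

lemma sum_dyadicIndices_add_le (g : ℕ → ℝ≥0∞) {s t u : ℝ} (hst : s ≤ t) (htu : t ≤ u) (m : ℕ) :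
    ∑ k ∈ dyadicIndices s t m, g k + ∑ k ∈ dyadicIndices t u m, g k ≤
      ∑ k ∈ dyadicIndices s u m, g k := by
  have hdisj : Disjoint (dyadicIndices s t m) (dyadicIndices t u m) :=
    Finset.disjoint_left.2 fun k hk hk' ↦ (Finset.mem_Ico.1 hk).2.not_ge
      ((Nat.floor_le_ceil _).trans (Finset.mem_Ico.1 hk').1)
  rw [← Finset.sum_union hdisj]
  refine Finset.sum_le_sum_of_subset (Finset.union_subset ?_ ?_)
  · exact Finset.Ico_subset_Ico_right (Nat.floor_mono (by gcongr))
  · exact Finset.Ico_subset_Ico_left (Nat.ceil_mono (by gcongr))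

lemma dyadicControl_add_le (f : ℝ → E) (q θ : ℝ) {s t u : ℝ} (hst : s ≤ t) (htu : t ≤ u) :
    dyadicControl f q θ s t + dyadicControl f q θ t u ≤ dyadicControl f q θ s u := by
  unfold dyadicControl
  rw [← ENNReal.tsum_add]
  refine ENNReal.tsum_le_tsum fun m ↦ ?_
  rw [← mul_add]
  gcongr
  exact sum_dyadicIndices_add_le _ hst htu m

theorem sum_edist_rpow_le_dyadicControl {f : ℝ → E} {q : ℝ} (hq : 1 < q) (θ : ℝ) {t : ℕ → ℝ}
    {N : ℕ} (ht : MonotoneOn t (Set.Iic N)) (h0 : 0 ≤ t 0) (hN : t N ≤ t 0 + 1)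
    (hf : ContinuousOn f (Set.Icc (t 0) (t N))) :
    ∑ i ∈ Finset.range N, edist (f (t (i + 1))) (f (t i)) ^ q ≤
      chainingConst q θ * dyadicControl f q θ (t 0) (t N) := by
  calc _ ≤ ∑ i ∈ Finset.range N, chainingConst q θ * dyadicControl f q θ (t i) (t (i + 1)) := by
        refine Finset.sum_le_sum fun i hi ↦ ?_
        have hiN : i + 1 ≤ N := Finset.mem_range.1 hi
        have hleft : t 0 ≤ t i := ht (by simp) (by grind) i.zero_le
        have hstep : t i ≤ t (i + 1) := ht (by grind) (by grind) i.le_succ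
        have hright : t (i + 1) ≤ t N := ht (by grind) (by simp) hiN
        rw [edist_comm]
        exact edist_rpow_le_dyadicControl hq θ (h0.trans hleft) hstep (by linarith)
          (hf.mono (Set.Icc_subset_Icc hleft hright))
    _ = chainingConst q θ * ∑ i ∈ Finset.range N, dyadicControl f q θ (t i) (t (i + 1)) :=
        (Finset.mul_sum ..).symm
    _ ≤ chainingConst q θ * dyadicControl f q θ (t 0) (t N) := by
        gcongr
        exact sum_range_le_of_superadditive (fun _ _ _ ↦ dyadicControl_add_le f q θ) ht

end Dyadic

lemma chainingConst_ne_zero {q : ℝ} (hq : 1 ≤ q) (θ : ℝ) : chainingConst q θ ≠ 0 := by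
  have hsum : ∑' m : ℕ, ((m : ℝ≥0∞) + 1) ^ (-(θ / (q - 1))) ≠ 0 :=
    fun h ↦ by simpa using ENNReal.tsum_eq_zero.1 h 0
  simp [chainingConst, ENNReal.rpow_eq_zero_iff, hsum, hq]

lemma chainingConst_ne_top {q θ : ℝ} (hq : 1 < q) (hθ : q - 1 < θ) : chainingConst q θ ≠ ∞ := by
  have hq' : 0 < q - 1 := sub_pos.2 hq
  have hexp : -(θ / (q - 1)) < -1 := by
    rw [neg_lt_neg_iff, one_lt_div hq']
    exact hθ
  have hsummable : Summable fun m : ℕ ↦ ((m : ℝ) + 1) ^ (-(θ / (q - 1))) := by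
    simpa using (summable_nat_add_iff 1).2 (Real.summable_nat_rpow.2 hexp)
  have hsum : ∑' m : ℕ, ((m : ℝ≥0∞) + 1) ^ (-(θ / (q - 1))) ≠ ∞ := by
    simpa only [ofReal_add_one_rpow] using hsummable.tsum_ofReal_ne_top
  exact ENNReal.mul_ne_top (by finiteness) (ENNReal.rpow_ne_top_of_nonneg hq'.le hsum)

section Metric

variable {E F : Type*} [PseudoMetricSpace E] [PseudoMetricSpace F]

/-- Finite `p`-variation on `[a, b]` for functions with values in a pseudometric space. For
real-valued functions this unfolds to `HasFinitePVariationOn`. -/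
def HasFiniteDistPVariationOn (f : ℝ → E) (p a b : ℝ) : Prop :=
  ∃ V : ℝ, ∀ (N : ℕ) (t : ℕ → ℝ), t 0 = a → t N = b →
    (∀ i, i < N → t i < t (i + 1)) →
    ∑ i ∈ Finset.range N, dist (f (t (i + 1))) (f (t i)) ^ p ≤ V

/-- The `m`-th term `(m+1)^θ 2^{-cm} ∑_{k<2^m} dist(X((k+1)/2^m), X(k/2^m))` of the series bounding
the partition sums in the chaining estimate. -/
noncomputable def weightedDyadicVariation (X : ℝ → F) (θ c : ℝ) (m : ℕ) : ℝ :=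
  ((m : ℝ) + 1) ^ θ * (2 : ℝ) ^ (-(c * (m : ℝ))) *
    ∑ k ∈ Finset.range (2 ^ m), dist (X (((k : ℝ) + 1) / 2 ^ m)) (X ((k : ℝ) / 2 ^ m))

lemma summable_weightedDyadicVariation {X : ℝ → F} (hX : HasFiniteDistPVariationOn X 1 0 1)
    (θ : ℝ) {c : ℝ} (hc : 0 < c) : Summable (weightedDyadicVariation X θ c) := by
  obtain ⟨V, hV⟩ := hX
  have hlevel (m : ℕ) :
      ∑ k ∈ Finset.range (2 ^ m), dist (X (((k : ℝ) + 1) / 2 ^ m)) (X ((k : ℝ) / 2 ^ m)) ≤ V := by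
    simpa using hV (2 ^ m) (fun k ↦ k / 2 ^ m) (by simp) (by simp) fun k _ ↦ by gcongr; simp
  have hgeom (m : ℕ) : (2 : ℝ) ^ (-(c * m)) = ((2 : ℝ) ^ (-c)) ^ m := by
    rw [← neg_mul, Real.rpow_mul_natCast zero_le_two]
  have hr : (2 : ℝ) ^ (-c) < 1 := Real.rpow_lt_one_of_one_lt_of_neg one_lt_two (neg_lt_zero.2 hc)
  refine ((summable_add_one_rpow_mul_geometric θ (by positivity) hr).mul_right V).of_nonneg_of_le
    (fun m ↦ ?_) fun m ↦ ?_
  · unfold weightedDyadicVariation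
    positivity
  · rw [weightedDyadicVariation, hgeom]
    gcongr
    exact hlevel m

lemma dyadicIndices_zero_one (m : ℕ) : dyadicIndices 0 1 m = Finset.range (2 ^ m) := by
  have : ⌊(2 : ℝ) ^ m⌋₊ = 2 ^ m := by exact_mod_cast Nat.floor_natCast (R := ℝ) (2 ^ m)
  rw [Finset.range_eq_Ico]
  simp [dyadicIndices, this]

lemma dyadicIncrement_rpow_le {M : ℝ → E} {X : ℝ → F} {α γ q b : ℝ} (hq : 0 ≤ q)
    (hαq : α * q = 1) (hb : 0 ≤ b) {m k : ℕ}
    (hMX : dist (M (((k : ℝ) + 1) / 2 ^ m)) (M ((k : ℝ) / 2 ^ m)) ≤ b * (2 : ℝ) ^ (-(γ * (m : ℝ))) *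
      dist (X (((k : ℝ) + 1) / 2 ^ m)) (X ((k : ℝ) / 2 ^ m)) ^ α) :
    dyadicIncrement M m k ^ q ≤
      ENNReal.ofReal (b ^ q * (2 : ℝ) ^ (-(γ * q * (m : ℝ))) *
        dist (X (((k : ℝ) + 1) / 2 ^ m)) (X ((k : ℝ) / 2 ^ m))) := by
  rw [dyadicIncrement, edist_dist, ENNReal.ofReal_rpow_of_nonneg dist_nonneg hq]
  refine ENNReal.ofReal_le_ofReal ((Real.rpow_le_rpow dist_nonneg hMX hq).trans_eq ?_)
  rw [Real.mul_rpow (by positivity) (by positivity), Real.mul_rpow hb (by positivity),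
    ← Real.rpow_mul zero_le_two, ← Real.rpow_mul dist_nonneg, hαq, Real.rpow_one, neg_mul,
    mul_right_comm γ]

lemma dyadicControl_zero_one_le {M : ℝ → E} {X : ℝ → F} {α γ q b : ℝ} (hq : 0 ≤ q)
    (hαq : α * q = 1) (hb : 0 ≤ b)
    (hMX : ∀ m k : ℕ, k < 2 ^ m →
      dist (M (((k : ℝ) + 1) / 2 ^ m)) (M ((k : ℝ) / 2 ^ m)) ≤ b * (2 : ℝ) ^ (-(γ * (m : ℝ))) *
        dist (X (((k : ℝ) + 1) / 2 ^ m)) (X ((k : ℝ) / 2 ^ m)) ^ α) (θ : ℝ) :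
    dyadicControl M q θ 0 1 ≤
      ENNReal.ofReal (b ^ q) * ∑' m, ENNReal.ofReal (weightedDyadicVariation X θ (γ * q) m) := by
  rw [dyadicControl, ← ENNReal.tsum_mul_left]
  refine ENNReal.tsum_le_tsum fun m ↦ ?_
  calc ((m : ℝ≥0∞) + 1) ^ θ * ∑ k ∈ dyadicIndices 0 1 m, dyadicIncrement M m k ^ q
      ≤ ENNReal.ofReal (((m : ℝ) + 1) ^ θ) * ∑ k ∈ Finset.range (2 ^ m),
          ENNReal.ofReal (b ^ q * 2 ^ (-(γ * q * m)) *
            dist (X (((k : ℝ) + 1) / 2 ^ m)) (X ((k : ℝ) / 2 ^ m))) := by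
        rw [ofReal_add_one_rpow, dyadicIndices_zero_one]
        gcongr with k hk
        exact dyadicIncrement_rpow_le hq hαq hb (hMX m k (Finset.mem_range.1 hk))
    _ = ENNReal.ofReal (b ^ q) * ENNReal.ofReal (weightedDyadicVariation X θ (γ * q) m) := by
        rw [← ENNReal.ofReal_sum_of_nonneg (fun k _ ↦ by positivity),
          ← ENNReal.ofReal_mul (by positivity), ← ENNReal.ofReal_mul (by positivity),
          weightedDyadicVariation, ← Finset.mul_sum]
        rw [mul_assoc (b ^ q), mul_left_comm, ← mul_assoc (((m : ℝ) + 1) ^ θ)]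

theorem ofReal_sum_dist_rpow_le {M : ℝ → E} {X : ℝ → F} {α γ q b : ℝ} (hq : 1 < q)
    (hαq : α * q = 1) (hb : 0 ≤ b) (hM : ContinuousOn M (Set.Icc 0 1))
    (hMX : ∀ m k : ℕ, k < 2 ^ m →
      dist (M (((k : ℝ) + 1) / 2 ^ m)) (M ((k : ℝ) / 2 ^ m)) ≤ b * (2 : ℝ) ^ (-(γ * (m : ℝ))) *
        dist (X (((k : ℝ) + 1) / 2 ^ m)) (X ((k : ℝ) / 2 ^ m)) ^ α) (θ : ℝ)
    {t : ℕ → ℝ} {N : ℕ} (ht : MonotoneOn t (Set.Iic N)) (h0 : t 0 = 0) (hN : t N = 1) :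
    ENNReal.ofReal (∑ i ∈ Finset.range N, dist (M (t (i + 1))) (M (t i)) ^ q) ≤
      chainingConst q θ * (ENNReal.ofReal (b ^ q) *
        ∑' m, ENNReal.ofReal (weightedDyadicVariation X θ (γ * q) m)) := by
  have hq₀ : 0 ≤ q := by linarith
  calc _ = ∑ i ∈ Finset.range N, edist (M (t (i + 1))) (M (t i)) ^ q := by
        rw [ENNReal.ofReal_sum_of_nonneg (fun i _ ↦ by positivity)]
        simp only [edist_dist, ENNReal.ofReal_rpow_of_nonneg dist_nonneg hq₀]
    _ ≤ chainingConst q θ * dyadicControl M q θ 0 1 := by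
        simpa [h0, hN, hM] using sum_edist_rpow_le_dyadicControl (f := M) hq θ ht
    _ ≤ _ := by
        gcongr
        exact dyadicControl_zero_one_le hq₀ hαq hb hMX θ

end Metric

theorem chaining_estimate_general (ε θ : ℝ) (hε : ε ∈ Set.Ioo (0 : ℝ) 1)
    (hθ : 1 / (1 - ε) - 1 < θ) :
    ∃ C : ℝ, 0 < C ∧ ∀ {E F : Type*} [PseudoMetricSpace E] [PseudoMetricSpace F] {γ : ℝ}
      {M : ℝ → E} {X : ℝ → F} {b : ℝ}, 0 ≤ b →
      ContinuousOn M (Set.Icc 0 1) →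
      (∀ (m k : ℕ), k < 2 ^ m →
        dist (M (((k : ℝ) + 1) / 2 ^ m)) (M ((k : ℝ) / 2 ^ m)) ≤
          b * (2 : ℝ) ^ (-(γ * (m : ℝ))) *
            dist (X (((k : ℝ) + 1) / 2 ^ m)) (X ((k : ℝ) / 2 ^ m)) ^ (1 - ε)) →
      (∀ (N : ℕ) (t : ℕ → ℝ), t 0 = 0 → t N = 1 →
        (∀ i, i < N → t i < t (i + 1)) →
        ENNReal.ofReal (∑ i ∈ Finset.range N, dist (M (t (i + 1))) (M (t i)) ^ (1 / (1 - ε))) ≤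
          ENNReal.ofReal (C * b ^ (1 / (1 - ε))) *
            ∑' m, ENNReal.ofReal (weightedDyadicVariation X θ (γ * (1 / (1 - ε))) m)) ∧
      (0 < γ → HasFiniteDistPVariationOn X 1 0 1 →
        HasFiniteDistPVariationOn M (1 / (1 - ε)) 0 1) := by
  have hε' : 0 < 1 - ε := sub_pos.2 hε.2
  have hεq : (1 - ε) * (1 / (1 - ε)) = 1 := mul_one_div_cancel hε'.ne'
  have hq : 1 < 1 / (1 - ε) := by rw [one_lt_div hε']; linarith [hε.1]
  generalize 1 / (1 - ε) = q at *
  have hC : chainingConst q θ ≠ ∞ := chainingConst_ne_top hq hθ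
  refine ⟨(chainingConst q θ).toReal, ENNReal.toReal_pos (chainingConst_ne_zero hq.le θ) hC, ?_⟩
  intro E F _ _ γ M X b hb hM hMX
  have hq₀ : 0 < q := one_pos.trans hq
  have hbound (N : ℕ) (t : ℕ → ℝ) (h0 : t 0 = 0) (hN : t N = 1)
      (ht : ∀ i, i < N → t i < t (i + 1)) :
      ENNReal.ofReal (∑ i ∈ Finset.range N, dist (M (t (i + 1))) (M (t i)) ^ q) ≤
        ENNReal.ofReal ((chainingConst q θ).toReal * b ^ q) *
          ∑' m, ENNReal.ofReal (weightedDyadicVariation X θ (γ * q) m) := by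
    have hmono : MonotoneOn t (Set.Iic N) :=
      monotoneOn_of_le_add_one Set.ordConnected_Iic fun i _ _ hi ↦ (ht i hi).le
    rw [ENNReal.ofReal_mul ENNReal.toReal_nonneg, ENNReal.ofReal_toReal hC, mul_assoc]
    exact ofReal_sum_dist_rpow_le hq hεq hb hM hMX θ hmono h0 hN
  refine ⟨hbound, fun hγ hX ↦ ?_⟩
  have hfin := (summable_weightedDyadicVariation hX θ (mul_pos hγ hq₀)).tsum_ofReal_ne_top
  exact ⟨_, fun N t h0 hN ht ↦ (ENNReal.ofReal_le_iff_le_toReal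
    (ENNReal.mul_ne_top ENNReal.ofReal_ne_top hfin)).1 (hbound N t h0 hN ht)⟩

/-- Deterministic chaining estimate: for `ε ∈ (0,1)`, `q = 1/(1-ε)` and `θ > q - 1`
there is a constant `C = C(q,θ)` such that for every `γ > 0`, every continuous `M`,
every finite-variation `X` and every `b ≥ 0` controlling the dyadic increments of `M`
by those of `X` as below, every partition sum `∑ |M(t_{i+1}) - M(t_i)|^q` is bounded by
`C b^q ∑_{m=0}^∞ (m+1)^θ 2^{-γqm} ∑_{k<2^m} |X((k+1)/2^m) - X(k/2^m)|`; in particular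
`M` has finite `q`-variation on `[0,1]`. -/
theorem chaining_estimate (ε θ : ℝ) (hε : ε ∈ Set.Ioo (0 : ℝ) 1)
    (hθ : 1 / (1 - ε) - 1 < θ) :
    ∃ C : ℝ, 0 < C ∧ ∀ γ : ℝ, 0 < γ → ∀ (M X : ℝ → ℝ) (b : ℝ), 0 ≤ b →
      ContinuousOn M (Set.Icc 0 1) →
      HasFinitePVariationOn X 1 0 1 →
      (∀ (m k : ℕ), k < 2 ^ m →
        |M (((k : ℝ) + 1) / 2 ^ m) - M ((k : ℝ) / 2 ^ m)| ≤
          b * (2 : ℝ) ^ (-(γ * (m : ℝ))) *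
            |X (((k : ℝ) + 1) / 2 ^ m) - X ((k : ℝ) / 2 ^ m)| ^ (1 - ε)) →
      (∀ (N : ℕ) (t : ℕ → ℝ), t 0 = 0 → t N = 1 →
        (∀ i, i < N → t i < t (i + 1)) →
        ENNReal.ofReal
            (∑ i ∈ Finset.range N, |M (t (i + 1)) - M (t i)| ^ (1 / (1 - ε))) ≤
          ENNReal.ofReal (C * b ^ (1 / (1 - ε))) *
            ∑' m : ℕ, ENNReal.ofReal
              (((m : ℝ) + 1) ^ θ * (2 : ℝ) ^ (-(γ * (1 / (1 - ε)) * (m : ℝ))) *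
                ∑ k ∈ Finset.range (2 ^ m),
                  |X (((k : ℝ) + 1) / 2 ^ m) - X ((k : ℝ) / 2 ^ m)|)) ∧
      HasFinitePVariationOn M (1 / (1 - ε)) 0 1 := by
  obtain ⟨C, hC, h⟩ := chaining_estimate_general ε θ hε hθ
  exact ⟨C, hC, fun γ hγ M X b hb hM hX hMX ↦
    (h (E := ℝ) (F := ℝ) hb hM hMX).imp_right fun hfin ↦ hfin hγ hX⟩
end
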